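/- arXiv:2203.04418 — 4 statements merged into one kernel-verified Lean document; each statement's English description precedes it below -/
import Mathlib

section
/- Let X be a nonempty set and R a reflexive binary relation on X. Then M(S,R) is nonempty for every nonempty finite subset S of X if, and only if, R is acyclic. -/
open Classical Finset symmDiff

section PrefDefs

variable {X : Type*}

/-- The asymmetric part `R^>` of a binary relation `R`. -/
def asymPart (R : X → X → Prop) : X → X → Prop := fun x y => R x y ∧ ¬ R y x

/-- `R` is acyclic: there is no cycle of pairwise distinct elements
`z_0 R^> z_1 R^> ⋯ R^> z_k R^> z_0`. -/
def AcyclicRel (R : X → X → Prop) : Prop :=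
  ¬ ∃ (k : ℕ) (z : Fin (k + 1) → X), Function.Injective z ∧
      ∀ i : Fin (k + 1), asymPart R (z i) (z (i + 1))

/-- An acyclic order: a reflexive acyclic binary relation. -/
def AcyclicOrd (R : X → X → Prop) : Prop := Reflexive R ∧ AcyclicRel R

/-- `M(S,R)`: the set of `R`-maximal elements of `S`. -/
noncomputable def MaxSet [DecidableEq X] (S : Finset X) (R : X → X → Prop) : Finset X :=
  S.filter fun x => ∀ y ∈ S, ¬ asymPart R y x

/-- The μ-top-difference semimetric, where the measure μ is given by the
weights `w x = μ {x}`. -/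
noncomputable def Dmu [Fintype X] [DecidableEq X] (w : X → ℝ) (R R' : X → X → Prop) : ℝ :=
  ∑ S : Finset X, ∑ x ∈ symmDiff (MaxSet S R) (MaxSet S R'), w x

/-- The top-difference semimetric `D`. -/
noncomputable def Dtop [Fintype X] [DecidableEq X] (R R' : X → X → Prop) : ℕ :=
  ∑ S : Finset X, (symmDiff (MaxSet S R) (MaxSet S R')).card

/-- `≿ ⊕ (a,b)`: if `b ∼ a` delete `(b,a)`, if `a, b` are `≿`-incomparable add `(a,b)`. -/
def oplusR (R : X → X → Prop) (a b : X) : X → X → Prop :=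
  fun x y => (R x y ∧ ¬(R b a ∧ x = b ∧ y = a)) ∨ (¬ R b a ∧ x = a ∧ y = b)

/-- `≿ ⊖ (a,b)`: delete the pair `(a,b)`. -/
def ominusR (R : X → X → Prop) (a b : X) : X → X → Prop :=
  fun x y => R x y ∧ ¬(x = a ∧ y = b)

/-- `≿ → ≿_0 ↠ ⊵` : `R0` is a one-step perturbation of `R` toward `R'`. -/
def OneStep (R R0 R' : X → X → Prop) : Prop :=
  AcyclicOrd R0 ∧
  ((∃ a b, asymPart R a b ∧ ¬ asymPart R' a b ∧
      (∀ x, asymPart R' x b → asymPart R x b) ∧ R0 = ominusR R a b) ∨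
   (∃ a b, ¬ asymPart R a b ∧ ¬ asymPart R b a ∧ asymPart R' a b ∧ R0 = oplusR R a b))

/-- `Q` is in-between `R` and `R'` : `Q` is an n-step perturbation of `R` toward `R'`
for some positive integer n. -/
def InBetween (R R' Q : X → X → Prop) : Prop :=
  ∃ (n : ℕ) (c : Fin (n + 1) → (X → X → Prop)),
    OneStep R (c 0) R' ∧
    (∀ i : Fin n, OneStep (c i.castSucc) (c i.succ) R') ∧
    c (Fin.last n) = Q

/-- `N(b,≿)`: the number of `x ≠ b` with not `x ≻ b`. -/
noncomputable def Nnum [Fintype X] (R : X → X → Prop) (b : X) : ℕ :=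
  (Finset.univ.filter fun x => x ≠ b ∧ ¬ asymPart R x b).card

/-- `≿_{ab}`: the partial order whose asymmetric part is `(X \ {a,b}) × {a,b}`. -/
def RabRel (a b : X) : X → X → Prop :=
  fun x y => x = y ∨ ((x ≠ a ∧ x ≠ b) ∧ (y = a ∨ y = b))

/-- `≿_{ab}^+`: as `≿_{ab}` but with `a` ranked strictly above `b`. -/
def RabPlusRel (a b : X) : X → X → Prop :=
  fun x y => RabRel a b x y ∨ (x = a ∧ y = b)

/-- `d` is a semimetric on the set of acyclic orders on `X`. -/
def IsSemimetricOn (d : (X → X → Prop) → (X → X → Prop) → ℝ) : Prop :=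
  (∀ R R', AcyclicOrd R → AcyclicOrd R' → 0 ≤ d R R') ∧
  (∀ R, AcyclicOrd R → d R R = 0) ∧
  (∀ R R', AcyclicOrd R → AcyclicOrd R' → d R R' = d R' R) ∧
  (∀ R R' R'', AcyclicOrd R → AcyclicOrd R' → AcyclicOrd R'' →
    d R R'' ≤ d R R' + d R' R'')

/-- Axiom 1. -/
def Axiom1 (d : (X → X → Prop) → (X → X → Prop) → ℝ) : Prop :=
  ∀ R R0 R' : X → X → Prop, AcyclicOrd R → AcyclicOrd R' →
    InBetween R R' R0 → d R R' = d R R0 + d R0 R'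

/-- Axiom 2. -/
def Axiom2 (d : (X → X → Prop) → (X → X → Prop) → ℝ) : Prop :=
  ∀ a b : X, a ≠ b → d (RabRel a b) (RabPlusRel a b) = 1

/-- Axiom 3. -/
def Axiom3 [Fintype X] (d : (X → X → Prop) → (X → X → Prop) → ℝ) : Prop :=
  (∀ (R : X → X → Prop) (a b : X), AcyclicOrd R → a ≠ b →
      ¬ asymPart R a b → ¬ asymPart R b a → AcyclicOrd (oplusR R a b) →
      d R (oplusR R a b) = (2 : ℝ) ^ (Nnum R b - 1) * d (RabRel a b) (RabPlusRel a b)) ∧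
  (∀ (R : X → X → Prop) (a b : X), AcyclicOrd R → asymPart R a b →
      d R (ominusR R a b) = (2 : ℝ) ^ (Nnum R b) * d (RabRel a b) (RabPlusRel a b))

/-- Axiom 4. -/
def Axiom4 (d : (X → X → Prop) → (X → X → Prop) → ℝ) : Prop :=
  ∀ R R' : X → X → Prop, AcyclicOrd R → AcyclicOrd R' →
    (∀ x y, asymPart R x y ↔ asymPart R' x y) → d R R' = 0

end PrefDefs

/-!
A vertex of a cycle is always beaten by its predecessor, so the vertices of a cycle form a finite
set without maximal elements. Conversely, if no element of a nonempty finite set `S` is maximal,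
choose for each `x ∈ S` some `f x ∈ S` that beats it. The iterates of `f` run into a periodic point,
and its orbit, read backwards over one minimal period, is a cycle without repetitions.
-/

section SimpleCycle

open Function

variable {α β : Type*} {r : α → α → Prop} {s : β → β → Prop} {f : α → α} {x : α}

/-- There are pairwise distinct `z 0, …, z k` with `r (z 0) (z 1)`, …, `r (z k) (z 0)`, so that `r`
is acyclic if there are none. Addition in `Fin (k + 1)` wraps around, which closes the cycle; for
`k = 0` the cycle is a loop `r (z 0) (z 0)`. -/
def HasSimpleCycle (r : α → α → Prop) : Prop :=
  ∃ (k : ℕ) (z : Fin (k + 1) → α), Injective z ∧ ∀ i, r (z i) (z (i + 1))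

namespace HasSimpleCycle

theorem map (g : r →r s) (hg : Injective g) : HasSimpleCycle r → HasSimpleCycle s := by
  rintro ⟨k, z, hz, hr⟩
  exact ⟨k, g ∘ z, hg.comp hz, fun i => g.map_rel (hr i)⟩

theorem swap : HasSimpleCycle r → HasSimpleCycle (Function.swap r) := by
  rintro ⟨k, z, hz, hr⟩
  refine ⟨k, fun i => z (-i), hz.comp neg_injective, fun i => ?_⟩
  have hpred : -(i + 1) + 1 = -i := by abel
  simpa only [Function.swap, hpred] using hr (-(i + 1))

theorem exists_finset_forall_exists :
    HasSimpleCycle r → ∃ S : Finset α, S.Nonempty ∧ ∀ x ∈ S, ∃ y ∈ S, r y x := by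
  rintro ⟨k, z, -, hr⟩
  refine ⟨univ.image z, univ_nonempty.image z, forall_mem_image.2 fun i _ => ?_⟩
  have hpred : r (z (i - 1)) (z i) := by simpa only [sub_add_cancel] using hr (i - 1)
  exact ⟨z (i - 1), mem_image_of_mem z (mem_univ _), hpred⟩

end HasSimpleCycle

theorem exists_iterate_mem_periodicPts [Finite α] (f : α → α) (x : α) :
    ∃ n, f^[n] x ∈ periodicPts f := by
  obtain ⟨m, n, hmn, heq⟩ := Finite.exists_ne_map_eq_of_infinite fun n => f^[n] x
  wlog hlt : m < n generalizing m n
  · exact this n m hmn.symm heq.symm (by lia)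
  refine ⟨m, mk_mem_periodicPts (Nat.sub_pos_of_lt hlt) ?_⟩
  calc f^[n - m] (f^[m] x) = f^[n - m + m] x := (iterate_add_apply f _ _ x).symm
    _ = f^[n] x := by rw [Nat.sub_add_cancel hlt.le]
    _ = f^[m] x := heq.symm

theorem hasSimpleCycle_of_mem_periodicPts (hx : x ∈ periodicPts f)
    (hr : ∀ n, r (f^[n] x) (f^[n + 1] x)) : HasSimpleCycle r := by
  obtain ⟨k, hk⟩ : ∃ k, minimalPeriod f x = k + 1 :=
    Nat.exists_eq_add_one.2 (minimalPeriod_pos_of_mem_periodicPts hx)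
  have hper : IsPeriodicPt f (k + 1) x := hk ▸ isPeriodicPt_minimalPeriod f x
  have hlt (i : Fin (k + 1)) : (i : ℕ) < minimalPeriod f x := i.isLt.trans_eq hk.symm
  have hwrap (i : Fin (k + 1)) : f^[(i + 1 : Fin (k + 1))] x = f^[i + 1] x := by
    rw [Fin.val_add, Fin.val_one', Nat.add_mod_mod, hper.iterate_mod_apply]
  refine ⟨k, fun i => f^[i] x, fun i j hij => ?_, fun i => ?_⟩
  · exact Fin.ext (iterate_injOn_Iio_minimalPeriod (hlt i) (hlt j) hij)
  · simpa only [hwrap] using hr i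

theorem hasSimpleCycle_of_forall_exists [Finite α] [Nonempty α] (h : ∀ x, ∃ y, r x y) :
    HasSimpleCycle r := by
  choose f hf using h
  obtain ⟨n, hn⟩ := exists_iterate_mem_periodicPts f (Classical.arbitrary α)
  refine hasSimpleCycle_of_mem_periodicPts hn fun m => ?_
  rw [iterate_succ_apply']
  exact hf _

theorem hasSimpleCycle_of_finset_forall_exists {S : Finset α} (hS : S.Nonempty)
    (h : ∀ x ∈ S, ∃ y ∈ S, r y x) : HasSimpleCycle r := by
  have : Nonempty S := hS.to_subtype
  have hcycle : HasSimpleCycle fun a b : S => r b a :=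
    hasSimpleCycle_of_forall_exists fun a =>
      let ⟨y, hy, hyx⟩ := h a a.2
      ⟨⟨y, hy⟩, hyx⟩
  exact hcycle.swap.map ⟨Subtype.val, id⟩ Subtype.val_injective

theorem stmt_0_general (r : α → α → Prop) :
    (∀ S : Finset α, S.Nonempty → ∃ x ∈ S, ∀ y ∈ S, ¬ r y x) ↔ ¬ HasSimpleCycle r := by
  constructor
  · intro hmax hcycle
    obtain ⟨S, hS, hbeaten⟩ := hcycle.exists_finset_forall_exists
    obtain ⟨x, hx, hxmax⟩ := hmax S hS
    obtain ⟨y, hy, hyx⟩ := hbeaten x hx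
    exact hxmax y hy hyx
  · intro hacyclic S hS
    by_contra! hbeaten
    exact hacyclic (hasSimpleCycle_of_finset_forall_exists hS hbeaten)

end SimpleCycle

/-- For a nonempty set `X` and a reflexive relation `R` on `X`,
`M(S,R)` is nonempty for every nonempty finite `S ⊆ X` iff `R` is acyclic. -/
theorem stmt_0 {X : Type*} [Nonempty X] (R : X → X → Prop) (hrefl : Reflexive R) :
    (∀ S : Finset X, S.Nonempty → ∃ x ∈ S, ∀ y ∈ S, ¬ asymPart R y x) ↔ AcyclicRel R :=
  stmt_0_general (asymPart R)
end

section
/- Let X be a nonempty finite set and let ≿ and ⊵ be distinct acyclic orders on X with the same symmetric parts. Then ≿ can be transformed into ⊵ in finitely many steps: there exist a positive integer n and acyclic orders ≿_0,…,≿_{n−1} on X such that ≿ → ≿_0 ↠ ⊵, ≿_{k−1} → ≿_k ↠ ⊵ for each k = 1,…,n−1, and ≿_{n−1} = ⊵. -/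
open Classical Finset symmDiff

/-! Compare `≻` with `⊳`. If some pair `a ≻ b` outside `⊳` is such that every `⊳`-predecessor of `b`
is already a `≻`-predecessor, delete it. Otherwise some element lacks one of its `⊳`-predecessors.
Only finitely many do, so one of them, `b`, reaches no other along `≻`; let `a` be a predecessor it
lacks. Every `≻`-edge met on a walk leaving `b` is then a `⊳`-edge, since it could be deleted
otherwise. Hence `a` is not `≻`-reachable from `b`, as that would close the `⊳`-edge `(a, b)` to a
`⊳`-cycle, and `(a, b)` can be added. Either move removes exactly one pair from the finite set of
disagreements. -/

section TransGen

open Relation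

variable {X : Type*} {r : X → X → Prop}

lemma exists_nodup_isChain_of_reflTransGen {a b : X} (h : ReflTransGen r a b) :
    ∃ l : List X, (a :: l).IsChain r ∧ (a :: l).getLast (List.cons_ne_nil a l) = b ∧
      (a :: l).Nodup := by
  induction h using ReflTransGen.head_induction_on with
  | refl => exact ⟨[], by simp⟩
  | @head a c hac _ ih =>
    obtain ⟨l, hchain, hlast, hnodup⟩ := ih
    by_cases ha : a ∈ c :: l
    · obtain ⟨s, t, hst⟩ := List.append_of_mem ha
      have hsuffix : a :: t <:+ c :: l := ⟨s, hst.symm⟩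
      refine ⟨t, hchain.suffix hsuffix, ?_, hnodup.sublist hsuffix.sublist⟩
      rw [← hlast, hsuffix.getLast]
    · exact ⟨c :: l, hchain.cons_cons hac, by simpa using hlast, List.nodup_cons.2 ⟨ha, hnodup⟩⟩

lemma exists_injective_cycle_iff_exists_transGen_self :
    (∃ (k : ℕ) (z : Fin (k + 1) → X), Function.Injective z ∧ ∀ i, r (z i) (z (i + 1))) ↔
      ∃ x, TransGen r x x := by
  constructor
  · rintro ⟨k, z, -, hz⟩
    have hreach (i : Fin (k + 1)) : ReflTransGen r (z 0) (z i) := by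
      induction i using Fin.induction with
      | zero => exact .refl
      | succ i ih => exact ih.tail (Fin.coeSucc_eq_succ ▸ hz i.castSucc)
    exact ⟨z 0, .tail' (hreach (Fin.last k)) (Fin.last_add_one k ▸ hz (Fin.last k))⟩
  · rintro ⟨x, hx⟩
    obtain ⟨y, hxy, hyx⟩ := TransGen.head'_iff.1 hx
    obtain ⟨l, hchain, hlast, hnodup⟩ := exists_nodup_isChain_of_reflTransGen hyx
    refine ⟨l.length, (y :: l).get, List.nodup_iff_injective_get.1 hnodup, fun i => ?_⟩
    induction i using Fin.lastCases with
    | last =>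
      rw [Fin.last_add_one]
      have hget : (y :: l).get (Fin.last l.length) = x := by
        rw [← hlast, List.getLast_eq_getElem]
        rfl
      exact hget ▸ hxy
    | cast i =>
      rw [Fin.coeSucc_eq_succ]
      exact List.isChain_iff_getElem.1 hchain i (by simp)

lemma transGen_or_reflTransGen_of_insert {a b x y : X}
    (h : TransGen (fun u v => r u v ∨ u = a ∧ v = b) x y) :
    TransGen r x y ∨ ReflTransGen r x a ∧ ReflTransGen r b y := by
  induction h with
  | single huv =>
    obtain huv | ⟨rfl, rfl⟩ := huv
    · exact .inl (.single huv)
    · exact .inr ⟨.refl, .refl⟩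
  | tail _ huv ih =>
    obtain huv | ⟨rfl, rfl⟩ := huv
    · exact ih.imp (.tail · huv) (And.imp_right (.tail · huv))
    · exact .inr ⟨ih.elim TransGen.to_reflTransGen And.left, .refl⟩

lemma irrefl_transGen_insert [Std.Irrefl (TransGen r)] {a b : X} (hba : ¬ ReflTransGen r b a) :
    Std.Irrefl (TransGen fun u v => r u v ∨ u = a ∧ v = b) where
  irrefl x hx := by
    obtain hx | ⟨hxa, hbx⟩ := transGen_or_reflTransGen_of_insert hx
    · exact Std.Irrefl.irrefl x hx
    · exact hba (hbx.trans hxa)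

lemma irrefl_transGen_mono {s : X → X → Prop} [Std.Irrefl (TransGen s)] (hrs : r ≤ s) :
    Std.Irrefl (TransGen r) where
  irrefl x hx := Std.Irrefl.irrefl x (TransGen.mono hrs x x hx)

lemma exists_mem_forall_not_transGen [Std.Irrefl (TransGen r)] {s : Set X} (hs : s.Finite)
    (hne : s.Nonempty) : ∃ b ∈ s, ∀ y ∈ s, ¬ TransGen r b y := by
  have : IsStrictOrder X (Function.swap (TransGen r)) := { }
  obtain ⟨⟨b, hb⟩, -, hmin⟩ :=
    (hs.wellFoundedOn (r := Function.swap (TransGen r))).has_min Set.univ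
      ⟨⟨_, hne.some_mem⟩, Set.mem_univ _⟩
  exact ⟨b, hb, fun y hy => hmin ⟨y, hy⟩ (Set.mem_univ _)⟩

end TransGen

section Moves

open Relation

variable {X : Type*} {P Q : X → X → Prop} {a b y : X}

/-- The set of ordered pairs on which two relations disagree; its cardinality measures the progress
of a sequence of perturbations. -/
def disagreement (P Q : X → X → Prop) : Set (X × X) := {p | ¬ (P p.1 p.2 ↔ Q p.1 p.2)}

/-- The elements that lack, in `P`, one of their `Q`-predecessors. -/
def deficient (P Q : X → X → Prop) : Set X := {b | ∃ x, Q x b ∧ ¬ P x b}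

/-- The pair `(a, b)` of the strict relation `P` may be deleted when moving toward `Q`: this is
condition (i) of a one-step perturbation. -/
def IsRemovable (P Q : X → X → Prop) (a b : X) : Prop :=
  P a b ∧ ¬ Q a b ∧ ∀ x, Q x b → P x b

/-- The pair `(a, b)` may be added to the strict relation `P` when moving toward `Q`: this is
condition (ii) of a one-step perturbation, where acyclicity of the result is expressed by the
absence of a `P`-walk from `b` to `a`. -/
def IsAddable (P Q : X → X → Prop) (a b : X) : Prop :=
  ¬ P a b ∧ Q a b ∧ ¬ ReflTransGen P b a

lemma disagreement_eq_empty_iff : disagreement P Q = ∅ ↔ P = Q := by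
  simp only [Set.eq_empty_iff_forall_notMem, disagreement, Set.mem_ofPred_eq, not_not, Prod.forall,
    funext_iff, eq_iff_iff]

lemma finite_deficient (h : (disagreement P Q).Finite) : (deficient P Q).Finite := by
  refine (h.image Prod.snd).subset ?_
  rintro b ⟨x, hQ, hP⟩
  exact ⟨(x, b), fun h => hP (h.2 hQ), rfl⟩

lemma mem_deficient_of_not_isRemovable (hrem : ¬ IsRemovable P Q a b) (hP : P a b)
    (hQ : ¬ Q a b) : b ∈ deficient P Q := by
  by_contra! hb
  exact hrem ⟨hP, hQ, fun x hx => by_contra fun hx' => hb ⟨x, hx, hx'⟩⟩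

lemma nonempty_deficient_of_forall_not_isRemovable (hrem : ∀ u v, ¬ IsRemovable P Q u v)
    (hne : (disagreement P Q).Nonempty) : (deficient P Q).Nonempty := by
  obtain ⟨⟨x, y⟩, hxy⟩ := hne
  refine ⟨y, ?_⟩
  by_cases hQ : Q x y
  · exact ⟨x, hQ, fun hP => hxy (iff_of_true hP hQ)⟩
  · have hP : P x y := by_contra fun hP => hxy (iff_of_false hP hQ)
    exact mem_deficient_of_not_isRemovable (hrem x y) hP hQ

lemma reflTransGen_of_forall_not_isRemovable (hrem : ∀ u v, ¬ IsRemovable P Q u v)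
    (hb : ∀ v ∈ deficient P Q, ¬ TransGen P b v) (hy : ReflTransGen P b y) :
    ReflTransGen Q b y := by
  induction hy with
  | refl => exact .refl
  | @tail u v hbu huv ih =>
    refine ih.tail (by_contra fun hQ => ?_)
    exact hb v (mem_deficient_of_not_isRemovable (hrem u v) huv hQ) (.tail' hbu huv)

lemma exists_isRemovable_or_isAddable [Std.Irrefl (TransGen P)] [Std.Irrefl (TransGen Q)]
    (hfin : (disagreement P Q).Finite) (hne : (disagreement P Q).Nonempty) :
    ∃ a b, IsRemovable P Q a b ∨ IsAddable P Q a b := by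
  by_cases! hrem : ∃ a b, IsRemovable P Q a b
  · obtain ⟨a, b, h⟩ := hrem
    exact ⟨a, b, .inl h⟩
  · obtain ⟨b, ⟨a, hQ, hP⟩, hmax⟩ := exists_mem_forall_not_transGen (r := P)
      (finite_deficient hfin) (nonempty_deficient_of_forall_not_isRemovable hrem hne)
    refine ⟨a, b, .inr ⟨hP, hQ, fun hba => ?_⟩⟩
    have hcycle : TransGen Q b b :=
      .tail' (reflTransGen_of_forall_not_isRemovable hrem hmax hba) hQ
    exact Std.Irrefl.irrefl b hcycle

end Moves

section Perturbation

open Relation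

variable {X : Type*} {R R' R₀ : X → X → Prop} {a b x y : X}

lemma rel_iff_asymPart_or_antisymmRel : R x y ↔ asymPart R x y ∨ AntisymmRel R x y := by
  unfold asymPart AntisymmRel
  tauto

lemma disagreement_asymPart (hsym : ∀ x y, AntisymmRel R x y ↔ AntisymmRel R' x y) :
    disagreement (asymPart R) (asymPart R') = disagreement R R' := by
  ext ⟨x, y⟩
  have := hsym x y
  simp only [disagreement, asymPart, AntisymmRel, Set.mem_ofPred_eq] at this ⊢
  tauto

lemma acyclicRel_iff_irrefl_transGen : AcyclicRel R ↔ Std.Irrefl (TransGen (asymPart R)) := by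
  rw [AcyclicRel, exists_injective_cycle_iff_exists_transGen_self, not_exists]
  exact ⟨fun h => ⟨h⟩, fun h => h.irrefl⟩

lemma asymPart_ominusR_le (hba : ¬ R b a) : asymPart (ominusR R a b) ≤ asymPart R := by
  rintro x y ⟨⟨hxy, hne⟩, hyx⟩
  exact ⟨hxy, fun h => hyx ⟨h, by rintro ⟨rfl, rfl⟩; exact hba hxy⟩⟩

lemma antisymmRel_ominusR (hba : ¬ R b a) :
    AntisymmRel (ominusR R a b) x y ↔ AntisymmRel R x y := by
  unfold AntisymmRel ominusR
  grind

lemma AcyclicOrd.ominusR (hR : AcyclicOrd R) (hab : asymPart R a b) :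
    AcyclicOrd (ominusR R a b) := by
  refine ⟨fun x => ⟨hR.1 x, ?_⟩, ?_⟩
  · rintro ⟨rfl, rfl⟩
    exact hab.2 hab.1
  · have := acyclicRel_iff_irrefl_transGen.1 hR.2
    exact acyclicRel_iff_irrefl_transGen.2 (irrefl_transGen_mono (asymPart_ominusR_le hab.2))

lemma disagreement_ominusR (hab : ¬ R' a b) :
    disagreement (ominusR R a b) R' = disagreement R R' \ {(a, b)} := by
  ext ⟨x, y⟩
  simp only [disagreement, ominusR, Set.mem_ofPred_eq, Set.mem_sdiff, Set.mem_singleton_iff,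
    Prod.mk.injEq]
  grind

lemma oplusR_iff (hba : ¬ R b a) : oplusR R a b x y ↔ R x y ∨ x = a ∧ y = b := by
  unfold oplusR
  tauto

lemma asymPart_oplusR_le (hba : ¬ R b a) :
    asymPart (oplusR R a b) ≤ fun x y => asymPart R x y ∨ x = a ∧ y = b := by
  intro x y h
  simp only [asymPart, oplusR_iff hba] at h ⊢
  tauto

lemma antisymmRel_oplusR (hab : a ≠ b) (hba : ¬ R b a) :
    AntisymmRel (oplusR R a b) x y ↔ AntisymmRel R x y := by
  simp only [AntisymmRel, oplusR_iff hba]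
  grind

lemma AcyclicOrd.oplusR (hR : AcyclicOrd R) (hba : ¬ R b a)
    (hreach : ¬ ReflTransGen (asymPart R) b a) : AcyclicOrd (oplusR R a b) := by
  refine ⟨fun x => (oplusR_iff hba).2 (.inl (hR.1 x)), ?_⟩
  have := acyclicRel_iff_irrefl_transGen.1 hR.2
  have := irrefl_transGen_insert hreach
  exact acyclicRel_iff_irrefl_transGen.2 (irrefl_transGen_mono (asymPart_oplusR_le hba))

lemma disagreement_oplusR (hba : ¬ R b a) (hab : R' a b) :
    disagreement (oplusR R a b) R' = disagreement R R' \ {(a, b)} := by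
  ext ⟨x, y⟩
  simp only [disagreement, oplusR_iff hba, Set.mem_ofPred_eq, Set.mem_sdiff,
    Set.mem_singleton_iff, Prod.mk.injEq]
  grind

lemma exists_oneStep_of_isRemovable (hR : AcyclicOrd R)
    (hsym : ∀ x y, AntisymmRel R x y ↔ AntisymmRel R' x y)
    (h : IsRemovable (asymPart R) (asymPart R') a b) :
    ∃ R₀, OneStep R R₀ R' ∧ (∀ x y, AntisymmRel R₀ x y ↔ AntisymmRel R' x y) ∧
      disagreement R₀ R' ⊂ disagreement R R' := by
  have hab : asymPart R a b := h.1
  have hsymm : ¬ AntisymmRel R' a b := fun h => hab.2 ((hsym a b).2 h).2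
  have hab' : ¬ R' a b := rel_iff_asymPart_or_antisymmRel.not.2 (not_or.2 ⟨h.2.1, hsymm⟩)
  refine ⟨ominusR R a b, ⟨hR.ominusR hab, .inl ⟨a, b, h.1, h.2.1, h.2.2, rfl⟩⟩,
    fun x y => (antisymmRel_ominusR hab.2).trans (hsym x y), ?_⟩
  rw [disagreement_ominusR hab', Set.sdiff_singleton_ssubset]
  exact fun hiff => hab' (hiff.1 hab.1)

lemma exists_oneStep_of_isAddable (hR : AcyclicOrd R)
    (hsym : ∀ x y, AntisymmRel R x y ↔ AntisymmRel R' x y)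
    (h : IsAddable (asymPart R) (asymPart R') a b) :
    ∃ R₀, OneStep R R₀ R' ∧ (∀ x y, AntisymmRel R₀ x y ↔ AntisymmRel R' x y) ∧
      disagreement R₀ R' ⊂ disagreement R R' := by
  obtain ⟨hP, hQ, hreach⟩ := h
  have hba_asym : ¬ asymPart R b a := fun hba => hreach (.single hba)
  have hsymm : ¬ AntisymmRel R a b := fun h => hQ.2 ((hsym a b).1 h).2
  have hab : ¬ R a b := rel_iff_asymPart_or_antisymmRel.not.2 (not_or.2 ⟨hP, hsymm⟩)
  have hba : ¬ R b a :=
    rel_iff_asymPart_or_antisymmRel.not.2 (not_or.2 ⟨hba_asym, fun h => hsymm h.symm⟩)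
  have hne : a ≠ b := fun h => hreach (h ▸ .refl)
  refine ⟨oplusR R a b, ⟨hR.oplusR hba hreach, .inr ⟨a, b, hP, hba_asym, hQ, rfl⟩⟩,
    fun x y => (antisymmRel_oplusR hne hba).trans (hsym x y), ?_⟩
  rw [disagreement_oplusR hba hQ.1, Set.sdiff_singleton_ssubset]
  exact fun hiff => hab (hiff.2 hQ.1)

lemma exists_oneStep_disagreement_ssubset (hR : AcyclicOrd R) (hR' : AcyclicRel R') (hne : R ≠ R')
    (hsym : ∀ x y, AntisymmRel R x y ↔ AntisymmRel R' x y) (hfin : (disagreement R R').Finite) :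
    ∃ R₀, OneStep R R₀ R' ∧ (∀ x y, AntisymmRel R₀ x y ↔ AntisymmRel R' x y) ∧
      disagreement R₀ R' ⊂ disagreement R R' := by
  have := acyclicRel_iff_irrefl_transGen.1 hR.2
  have := acyclicRel_iff_irrefl_transGen.1 hR'
  have hnonempty : (disagreement R R').Nonempty :=
    Set.nonempty_iff_ne_empty.2 (disagreement_eq_empty_iff.not.2 hne)
  rw [← disagreement_asymPart hsym] at hfin hnonempty
  obtain ⟨a, b, h | h⟩ := exists_isRemovable_or_isAddable hfin hnonempty
  · exact exists_oneStep_of_isRemovable hR hsym h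
  · exact exists_oneStep_of_isAddable hR hsym h

lemma OneStep.inBetween (h : OneStep R R₀ R') : InBetween R R' R₀ :=
  ⟨0, fun _ => R₀, h, fun i => i.elim0, rfl⟩

lemma InBetween.cons {S : X → X → Prop} (hstep : OneStep R R₀ R') (h : InBetween R₀ R' S) :
    InBetween R R' S := by
  obtain ⟨n, c, hfirst, hsteps, hlast⟩ := h
  refine ⟨n + 1, Fin.cons R₀ c, hstep, fun i => ?_, hlast⟩
  induction i using Fin.cases with
  | zero => exact hfirst
  | succ i => exact hsteps i

theorem stmt_1_general (hR : AcyclicOrd R) (hR' : AcyclicRel R') (hne : R ≠ R')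
    (hsym : ∀ x y, AntisymmRel R x y ↔ AntisymmRel R' x y) (hfin : (disagreement R R').Finite) :
    InBetween R R' R' := by
  induction hcard : (disagreement R R').ncard using Nat.strong_induction_on generalizing R with
  | _ n ih =>
    obtain ⟨R₀, hstep, hsym₀, hlt⟩ := exists_oneStep_disagreement_ssubset hR hR' hne hsym hfin
    obtain rfl | hne₀ := eq_or_ne R₀ R'
    · exact hstep.inBetween
    · exact .cons hstep (ih _ (hcard ▸ Set.ncard_lt_ncard hlt hfin) hstep.1 hne₀ hsym₀
        (hfin.subset hlt.subset) rfl)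

end Perturbation

/-- Two distinct acyclic orders on a nonempty finite set with the same
symmetric parts can be transformed into one another by finitely many one-step
perturbations. -/
theorem stmt_1 {X : Type*} [Fintype X] [Nonempty X] (R R' : X → X → Prop)
    (hR : AcyclicOrd R) (hR' : AcyclicOrd R') (hne : R ≠ R')
    (hsym : ∀ x y, (R x y ∧ R y x) ↔ (R' x y ∧ R' y x)) :
    InBetween R R' R' :=
  stmt_1_general hR hR'.2 hne hsym (Set.toFinite _)
end

section
/- Let X be a finite set, let ≿, ≿_0, ⊵ be acyclic orders on X with ≿ → ≿_0 ↠ ⊵ (≿_0 is a one-step perturbation of ≿ toward ⊵), and let S ⊆ X. Then the sets M(S,≿) △ M(S,≿_0) and M(S,≿_0) △ M(S,⊵) are disjoint, and their union equals M(S,≿) △ M(S,⊵). -/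
open Classical Finset symmDiff

/-! In a Boolean algebra, `a ∆ b` and `b ∆ c` are disjoint exactly when `b` lies between `a` and
`c`, and then they join to `a ∆ c`. So it suffices that `M(S,≿_0)` lies between `M(S,≿)` and
`M(S,⊵)`. A one-step perturbation changes the set of strict dominators of the single alternative
`b`. Deleting `a ≻ b` can only make `b` maximal, and if it does then `b` is `⊵`-maximal as well,
because `⊵` ranks nothing above `b` but former `≻`-dominators other than `a`. Adding `a ≻ b` can
only destroy the maximality of `b`, by means of `a`, which also `⊵`-dominates `b`. -/

section GeneralizedBooleanAlgebra

variable {α : Type*} [GeneralizedBooleanAlgebra α] {a b c : α}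

theorem disjoint_sdiff_sdiff_iff_le_sup : Disjoint (b \ a) (b \ c) ↔ b ≤ a ⊔ c := by
  rw [disjoint_iff, ← sdiff_sup, sdiff_eq_bot_iff]

theorem disjoint_sdiff_sdiff_iff_inf_le : Disjoint (a \ b) (c \ b) ↔ a ⊓ c ≤ b := by
  rw [disjoint_iff, ← inf_sdiff, sdiff_eq_bot_iff]

theorem disjoint_symmDiff_symmDiff_iff : Disjoint (a ∆ b) (b ∆ c) ↔ b ∈ Set.uIcc a c := by
  have hab_bc : Disjoint (a \ b) (b \ c) := disjoint_sdiff_self_left.mono_right sdiff_le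
  have hba_cb : Disjoint (b \ a) (c \ b) := disjoint_sdiff_self_right.mono_left sdiff_le
  simp only [symmDiff, disjoint_sup_left, disjoint_sup_right, hab_bc, hba_cb, true_and, and_true,
    disjoint_sdiff_sdiff_iff_le_sup, disjoint_sdiff_sdiff_iff_inf_le, Set.uIcc, Set.mem_Icc]
  exact and_comm

theorem symmDiff_sup_symmDiff_of_mem_uIcc (h : b ∈ Set.uIcc a c) :
    a ∆ b ⊔ b ∆ c = a ∆ c := by
  rw [← (disjoint_symmDiff_symmDiff_iff.2 h).symmDiff_eq_sup, symmDiff_assoc,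
    symmDiff_symmDiff_cancel_left]

end GeneralizedBooleanAlgebra

section Preferences

variable {X : Type*} {R R0 R' : X → X → Prop} {a b x y : X}

theorem ne_of_asymPart (h : asymPart R x y) : x ≠ y := by
  rintro rfl
  exact h.2 h.1

theorem asymPart_ominusR_iff (hab : asymPart R a b) :
    asymPart (ominusR R a b) x y ↔ asymPart R x y ∧ ¬(x = a ∧ y = b) := by
  simp only [asymPart, ominusR] at hab ⊢
  grind

theorem asymPart_oplusR_iff (hne : a ≠ b) (hba : ¬ asymPart R b a) :
    asymPart (oplusR R a b) x y ↔ asymPart R x y ∨ (x = a ∧ y = b) := by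
  simp only [asymPart, oplusR] at hba ⊢
  grind

section MaxSet

variable [DecidableEq X]

theorem mem_maxSet {S : Finset X} : x ∈ MaxSet S R ↔ x ∈ S ∧ ∀ y ∈ S, ¬ asymPart R y x :=
  Finset.mem_filter

theorem maxSet_inter_maxSet_subset (h : asymPart R0 ≤ asymPart R ⊔ asymPart R') (S : Finset X) :
    MaxSet S R ∩ MaxSet S R' ⊆ MaxSet S R0 := by
  intro x hx
  obtain ⟨hxR, hxR'⟩ := Finset.mem_inter.1 hx
  obtain ⟨hxS, hmaxR⟩ := mem_maxSet.1 hxR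
  have hmaxR' := (mem_maxSet.1 hxR').2
  exact mem_maxSet.2 ⟨hxS, fun y hy hyx => (h y x hyx).elim (hmaxR y hy) (hmaxR' y hy)⟩

theorem maxSet_subset_maxSet_union
    (h : ∀ x, (∀ y, asymPart R y x → asymPart R0 y x) ∨ ∀ y, asymPart R' y x → asymPart R0 y x)
    (S : Finset X) : MaxSet S R0 ⊆ MaxSet S R ∪ MaxSet S R' := by
  intro x hx
  obtain ⟨hxS, hmax⟩ := mem_maxSet.1 hx
  refine Finset.mem_union.2 ((h x).imp (fun hR => ?_) fun hR' => ?_)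
  · exact mem_maxSet.2 ⟨hxS, fun y hy hyx => hmax y hy (hR y hyx)⟩
  · exact mem_maxSet.2 ⟨hxS, fun y hy hyx => hmax y hy (hR' y hyx)⟩

end MaxSet

namespace OneStep

theorem asymPart_le_sup (h : OneStep R R0 R') : asymPart R0 ≤ asymPart R ⊔ asymPart R' := by
  intro x y hxy
  obtain ⟨-, ⟨a, b, hab, -, -, rfl⟩ | ⟨a, b, -, hba, hab', rfl⟩⟩ := h
  · exact Or.inl ((asymPart_ominusR_iff hab).1 hxy).1
  · obtain hxy | ⟨rfl, rfl⟩ := (asymPart_oplusR_iff (ne_of_asymPart hab') hba).1 hxy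
    · exact Or.inl hxy
    · exact Or.inr hab'

theorem asymPart_imp_or_asymPart_imp (h : OneStep R R0 R') (x : X) :
    (∀ y, asymPart R y x → asymPart R0 y x) ∨ ∀ y, asymPart R' y x → asymPart R0 y x := by
  obtain ⟨-, ⟨a, b, hab, hab', hdom, rfl⟩ | ⟨a, b, -, hba, hab', rfl⟩⟩ := h
  · obtain rfl | hxb := eq_or_ne x b
    · refine Or.inr fun y hyx => (asymPart_ominusR_iff hab).2 ⟨hdom y hyx, ?_⟩
      rintro ⟨rfl, -⟩
      exact hab' hyx
    · exact Or.inl fun y hyx => (asymPart_ominusR_iff hab).2 ⟨hyx, fun hyx_eq => hxb hyx_eq.2⟩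
  · have hne : a ≠ b := ne_of_asymPart hab'
    exact Or.inl fun y hyx => (asymPart_oplusR_iff hne hba).2 (Or.inl hyx)

theorem maxSet_mem_uIcc [DecidableEq X] (h : OneStep R R0 R') (S : Finset X) :
    MaxSet S R0 ∈ Set.uIcc (MaxSet S R) (MaxSet S R') :=
  ⟨maxSet_inter_maxSet_subset h.asymPart_le_sup S,
    maxSet_subset_maxSet_union h.asymPart_imp_or_asymPart_imp S⟩

end OneStep

end Preferences

theorem stmt_2_general {X : Type*} [DecidableEq X] {R R0 R' : X → X → Prop}
    (h : OneStep R R0 R') (S : Finset X) :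
    Disjoint (symmDiff (MaxSet S R) (MaxSet S R0)) (symmDiff (MaxSet S R0) (MaxSet S R')) ∧
    (symmDiff (MaxSet S R) (MaxSet S R0)) ∪ (symmDiff (MaxSet S R0) (MaxSet S R'))
      = symmDiff (MaxSet S R) (MaxSet S R') :=
  ⟨disjoint_symmDiff_symmDiff_iff.2 (h.maxSet_mem_uIcc S),
    symmDiff_sup_symmDiff_of_mem_uIcc (h.maxSet_mem_uIcc S)⟩

/-- If `≿ → ≿_0 ↠ ⊵`, then for every `S ⊆ X` the sets
`M(S,≿) △ M(S,≿_0)` and `M(S,≿_0) △ M(S,⊵)` are disjoint and their union is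
`M(S,≿) △ M(S,⊵)`. -/
theorem stmt_2 {X : Type*} [Fintype X] [DecidableEq X]
    (R R0 R' : X → X → Prop) (hR : AcyclicOrd R) (hR' : AcyclicOrd R')
    (h : OneStep R R0 R') (S : Finset X) :
    Disjoint (symmDiff (MaxSet S R) (MaxSet S R0)) (symmDiff (MaxSet S R0) (MaxSet S R')) ∧
    (symmDiff (MaxSet S R) (MaxSet S R0)) ∪ (symmDiff (MaxSet S R0) (MaxSet S R'))
      = symmDiff (MaxSet S R) (MaxSet S R') :=
  stmt_2_general h S
end

section
/- Let X be a finite set and let ≿_1 and ≿_2 be regular preorders on X such that M(S,≿_1) = M(S,≿_2) for every two-element subset S of X. Then ≿_1 = ≿_2. -/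
open Classical Finset symmDiff

/-- The indifference part `ind(≿)` of a preorder. -/
def indPart {X : Type*} (R : X → X → Prop) : X → X → Prop :=
  fun x y => ∀ z, (asymPart R x z ↔ asymPart R y z) ∧ (asymPart R z x ↔ asymPart R z y)

/-!
On a menu `{x, y}` with `x ≠ y`, the element `y` fails to be maximal exactly when `x ≻ y`, so
two-element menus determine the asymmetric part. The indifference part is defined from the
asymmetric part alone, and in a regular relation it is the symmetric part; hence the asymmetric
part determines the whole relation.
-/

/-- A binary relation is regular if its symmetric part is its indifference part. The regular
preorders are the preorders with this property, which makes sense for every relation. -/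
def RegularRel {X : Type*} (R : X → X → Prop) : Prop :=
  ∀ x y, (R x y ∧ R y x) ↔ indPart R x y

section RegularRel

variable {X : Type*} {R R1 R2 : X → X → Prop}

theorem asymPart_irrefl (R : X → X → Prop) (x : X) : ¬ asymPart R x x :=
  fun h => h.2 h.1

theorem mem_maxSet_pair_right [DecidableEq X] {x y : X} :
    y ∈ MaxSet {x, y} R ↔ ¬ asymPart R x y := by
  simp [MaxSet, asymPart_irrefl]

theorem asymPart_eq_of_maxSet_eq [DecidableEq X]
    (hM : ∀ S : Finset X, S.card = 2 → MaxSet S R1 = MaxSet S R2) :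
    asymPart R1 = asymPart R2 := by
  ext x y
  obtain rfl | hxy := eq_or_ne x y
  · exact iff_of_false (asymPart_irrefl R1 x) (asymPart_irrefl R2 x)
  · rw [← not_iff_not, ← mem_maxSet_pair_right, ← mem_maxSet_pair_right,
      hM {x, y} (card_pair hxy)]

theorem indPart_eq_of_asymPart_eq (h : asymPart R1 = asymPart R2) :
    indPart R1 = indPart R2 := by
  unfold indPart
  rw [h]

theorem rel_iff_asymPart_or_symm {x y : X} : R x y ↔ asymPart R x y ∨ (R x y ∧ R y x) := by
  unfold asymPart
  tauto

theorem RegularRel.eq_of_asymPart_eq (hR1 : RegularRel R1) (hR2 : RegularRel R2)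
    (h : asymPart R1 = asymPart R2) : R1 = R2 := by
  ext x y
  calc
    R1 x y ↔ asymPart R1 x y ∨ indPart R1 x y := by rw [← hR1, ← rel_iff_asymPart_or_symm]
    _ ↔ asymPart R2 x y ∨ indPart R2 x y := by rw [h, indPart_eq_of_asymPart_eq h]
    _ ↔ R2 x y := by rw [← hR2, ← rel_iff_asymPart_or_symm]

theorem stmt_9_general [DecidableEq X] (hR1 : RegularRel R1) (hR2 : RegularRel R2)
    (hM : ∀ S : Finset X, S.card = 2 → MaxSet S R1 = MaxSet S R2) : R1 = R2 :=
  hR1.eq_of_asymPart_eq hR2 (asymPart_eq_of_maxSet_eq hM)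

end RegularRel

/-- regular preorders that have the same maximal sets on every
two-element menu coincide. -/
theorem stmt_9 {X : Type*} [Fintype X] [DecidableEq X]
    (R1 R2 : X → X → Prop)
    (h1 : Reflexive R1 ∧ Transitive R1) (h2 : Reflexive R2 ∧ Transitive R2)
    (hreg1 : ∀ x y, (R1 x y ∧ R1 y x) ↔ indPart R1 x y)
    (hreg2 : ∀ x y, (R2 x y ∧ R2 y x) ↔ indPart R2 x y)
    (hM : ∀ S : Finset X, S.card = 2 → MaxSet S R1 = MaxSet S R2) :
    R1 = R2 := by
  exact stmt_9_general hreg1 hreg2 hM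
end
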